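/- Let G be a graph of order n and size m, and t a positive number with nt an integer and m ≤ nt ≤ 2m. Then Sdyn_t(G) = Pβ_{nt−m}(G): the minimum size of a τ-dynamic monopoly over all threshold assignments with average at least t equals the minimum size of a vertex set covering at least nt − m edges of G. -/

import Mathlib

open Finset

variable {V : Type*}

noncomputable section

/-- The set of edges of `G` covered by the vertex set `S` (i.e. incident with some vertex of `S`). -/
def coveredEdges (G : SimpleGraph V) [Fintype V] [DecidableEq V] [DecidableRel G.Adj]
    (S : Finset V) : Finset (Sym2 V) :=
  G.edgeFinset.filter (fun e => ∃ v ∈ S, v ∈ e)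

/-- `τ` is a valid threshold assignment: `0 ≤ τ v ≤ deg v`. -/
def validThresholds (G : SimpleGraph V) [Fintype V] [DecidableRel G.Adj] (τ : V → ℕ) : Prop :=
  ∀ v, τ v ≤ G.degree v

/-- `M` is a `τ`-static monopoly: every vertex outside `M` has at least `τ v` neighbors in `M`. -/
def isMonopoly (G : SimpleGraph V) [Fintype V] [DecidableEq V] [DecidableRel G.Adj]
    (τ : V → ℕ) (M : Finset V) : Prop :=
  ∀ v ∉ M, τ v ≤ (G.neighborFinset v ∩ M).card

/-- One activation step: add all vertices with at least `τ v` neighbors among active vertices. -/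
def dynStep (G : SimpleGraph V) [Fintype V] [DecidableEq V] [DecidableRel G.Adj]
    (τ : V → ℕ) (A : Finset V) : Finset V :=
  A ∪ Finset.univ.filter (fun v => τ v ≤ (G.neighborFinset v ∩ A).card)

/-- `D` is a `τ`-dynamic monopoly: iterating activation from `D` reaches all vertices. -/
def isDynMonopoly (G : SimpleGraph V) [Fintype V] [DecidableEq V] [DecidableRel G.Adj]
    (τ : V → ℕ) (D : Finset V) : Prop :=
  ∃ k, (dynStep G τ)^[k] D = Finset.univ

/-- `Pbeta G s`: minimum size of a vertex set covering at least `s` edges of `G`. -/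
def Pbeta (G : SimpleGraph V) [Fintype V] [DecidableEq V] [DecidableRel G.Adj] (s : ℕ) : ℕ :=
  sInf {c | ∃ S : Finset V, S.card = c ∧ s ≤ (coveredEdges G S).card}

/-- `Smon G t`: minimum size of a `τ`-static monopoly over all valid `τ` with average at least `t`. -/
def Smon (G : SimpleGraph V) [Fintype V] [DecidableEq V] [DecidableRel G.Adj] (t : ℝ) : ℕ :=
  sInf {c | ∃ (τ : V → ℕ) (M : Finset V), validThresholds G τ ∧
    (Fintype.card V : ℝ) * t ≤ ∑ v, (τ v : ℝ) ∧ isMonopoly G τ M ∧ M.card = c}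

/-- `Sdyn G t`: minimum size of a `τ`-dynamic monopoly over all valid `τ` with average at least `t`. -/
def Sdyn (G : SimpleGraph V) [Fintype V] [DecidableEq V] [DecidableRel G.Adj] (t : ℝ) : ℕ :=
  sInf {c | ∃ (τ : V → ℕ) (D : Finset V), validThresholds G τ ∧
    (Fintype.card V : ℝ) * t ≤ ∑ v, (τ v : ℝ) ∧ isDynMonopoly G τ D ∧ D.card = c}


lemma sum_nbr_eq_aux (G : SimpleGraph V) [Fintype V] [DecidableEq V] [DecidableRel G.Adj]
    (c : V → V → ℕ) :
    ∑ v, ∑ u ∈ G.neighborFinset v, c v u =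
      ∑ e ∈ G.edgeFinset, Sym2.lift ⟨fun a b => c a b + c b a, fun a b => by ring⟩ e := by
  have h1 : ∑ v, ∑ u ∈ G.neighborFinset v, c v u = ∑ d : G.Dart, c d.fst d.snd := by
    rw [← Finset.sum_fiberwise (s := (Finset.univ : Finset G.Dart)) (g := fun d => d.fst)]
    refine Finset.sum_congr rfl fun v _ => ?_
    refine Finset.sum_bij' (fun u hu => ⟨(v, u), by simpa using hu⟩) (fun d _ => d.snd)
      ?_ ?_ ?_ ?_ ?_
    · intro u hu; simp
    · rintro ⟨⟨a, b⟩, hab⟩ hd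
      simp at hd hab ⊢
      subst hd; exact hab
    · intro u hu; simp
    · rintro ⟨⟨a, b⟩, hab⟩ hd
      simp at hd
      subst hd; rfl
    · intro u hu; simp
  rw [h1, ← Finset.sum_fiberwise_of_maps_to (s := (Finset.univ : Finset G.Dart))
    (g := fun d => d.edge) (t := G.edgeFinset) (fun d _ => by simpa using d.edge_mem)]
  refine Finset.sum_congr rfl fun e he => ?_
  induction e using Sym2.ind with
  | _ a b =>
    have hab : G.Adj a b := by simpa using he
    have := SimpleGraph.Dart.edge_fiber (⟨(a, b), hab⟩ : G.Dart)
    have h2 : (Finset.univ.filter fun d : G.Dart => d.edge = s(a, b)) =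
        {⟨(a, b), hab⟩, (⟨(a, b), hab⟩ : G.Dart).symm} := this
    rw [h2, Finset.sum_pair]
    · simp
    · exact (SimpleGraph.Dart.symm_ne _).symm

lemma sum_cov_aux (G : SimpleGraph V) [Fintype V] [DecidableEq V] [DecidableRel G.Adj]
    (S : Finset V) :
    ∑ e ∈ G.edgeFinset, (1 + if ∃ v ∈ S, v ∈ e then 1 else 0) =
      G.edgeFinset.card + (coveredEdges G S).card := by
  rw [Finset.sum_add_distrib, coveredEdges, Finset.card_filter]
  simp

lemma dyn_to_cover_aux (G : SimpleGraph V) [Fintype V] [DecidableEq V] [DecidableRel G.Adj]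
    (τ : V → ℕ) (D : Finset V) (hτ : validThresholds G τ) (hD : isDynMonopoly G τ D) :
    ∑ v, τ v ≤ G.edgeFinset.card + (coveredEdges G D).card := by
  classical
  obtain ⟨K, hK⟩ := hD
  have hex : ∀ v, ∃ k, v ∈ (dynStep G τ)^[k] D := fun v => ⟨K, by rw [hK]; simp⟩
  let f : V → ℕ := fun v => Nat.find (hex v)
  have key : ∀ v, τ v ≤ ∑ u ∈ G.neighborFinset v, if v ∈ D ∨ f u < f v then 1 else 0 := by
    intro v
    rw [← Finset.card_filter]
    by_cases hv : v ∈ D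
    · simpa [hv] using hτ v
    · have hs : v ∈ (dynStep G τ)^[f v] D := Nat.find_spec (hex v)
      obtain hj | ⟨j, hj⟩ : f v = 0 ∨ ∃ j, f v = j + 1 := by
        cases f v <;> simp
      · rw [hj] at hs; exact absurd hs hv
      · have hn : v ∉ (dynStep G τ)^[j] D := Nat.find_min (hex v) (show j < f v by omega)
        rw [hj, Function.iterate_succ_apply', dynStep] at hs
        simp only [Finset.mem_union, hn, false_or, Finset.mem_filter, Finset.mem_univ,
          true_and] at hs
        refine hs.trans (Finset.card_le_card ?_)
        intro u hu
        rw [Finset.mem_inter] at hu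
        have : f u ≤ j := Nat.find_min' (hex u) hu.2
        exact Finset.mem_filter.2 ⟨hu.1, Or.inr (by omega)⟩
  refine (Finset.sum_le_sum fun v _ => key v).trans ?_
  rw [sum_nbr_eq_aux G (fun v u => if v ∈ D ∨ f u < f v then 1 else 0), ← sum_cov_aux]
  refine Finset.sum_le_sum fun e he => ?_
  induction e using Sym2.ind with
  | _ a b =>
    simp only [Sym2.lift_mk, Sym2.mem_iff]
    have h : (∃ v ∈ D, v = a ∨ v = b) ↔ (a ∈ D ∨ b ∈ D) := by aesop
    simp only [h]
    split_ifs <;> first | omega | (exfalso; grind)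

lemma cover_to_dyn_aux (G : SimpleGraph V) [Fintype V] [DecidableEq V] [DecidableRel G.Adj]
    (S : Finset V) : ∃ τ : V → ℕ, validThresholds G τ ∧ isDynMonopoly G τ S ∧
    G.edgeFinset.card + (coveredEdges G S).card ≤ ∑ v, τ v := by
  classical
  let e := Fintype.equivFin V
  let f : V → ℕ := fun v => if v ∈ S then 0 else (e v : ℕ) + 1
  have hf0 : ∀ v, v ∈ S → f v = 0 := fun v hv => by simp [f, hv]
  have hf1 : ∀ v, v ∉ S → f v = (e v : ℕ) + 1 := fun v hv => by simp [f, hv]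
  let τ : V → ℕ := fun v => ((G.neighborFinset v).filter fun u => v ∈ S ∨ f u < f v).card
  refine ⟨τ, ?_, ?_, ?_⟩
  · intro v
    exact Finset.card_filter_le _ _
  · have hk : ∀ k v, f v ≤ k → v ∈ (dynStep G τ)^[k] S := by
      intro k
      induction k with
      | zero =>
        intro v hv
        by_contra h
        have := hf1 v h
        omega
      | succ k ih =>
        intro v hv
        rw [Function.iterate_succ_apply', dynStep]
        by_cases hvS : v ∈ S
        · exact Finset.mem_union_left _ (ih v (by rw [hf0 v hvS]; omega))
        · refine Finset.mem_union_right _ (Finset.mem_filter.2 ⟨Finset.mem_univ _, ?_⟩)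
          refine Finset.card_le_card ?_
          intro u hu
          rw [Finset.mem_filter] at hu
          refine Finset.mem_inter.2 ⟨hu.1, ih u ?_⟩
          have := hu.2.resolve_left hvS
          omega
    refine ⟨Fintype.card V, Finset.eq_univ_of_forall fun v => hk _ v ?_⟩
    by_cases hvS : v ∈ S
    · rw [hf0 v hvS]; omega
    · rw [hf1 v hvS]; exact (e v).isLt
  · have : ∑ v, τ v = ∑ v, ∑ u ∈ G.neighborFinset v, if v ∈ S ∨ f u < f v then 1 else 0 :=
      Finset.sum_congr rfl fun v _ => Finset.card_filter _ _
    rw [this, sum_nbr_eq_aux G (fun v u => if v ∈ S ∨ f u < f v then 1 else 0), ← sum_cov_aux]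
    refine Finset.sum_le_sum fun p hp => ?_
    induction p using Sym2.ind with
    | _ a b =>
      have hab : G.Adj a b := by simpa using hp
      have hne : (e a : ℕ) ≠ e b := fun h => hab.ne (e.injective (Fin.ext h))
      simp only [Sym2.lift_mk, Sym2.mem_iff]
      have h : (∃ v ∈ S, v = a ∨ v = b) ↔ (a ∈ S ∨ b ∈ S) := by aesop
      simp only [h]
      by_cases ha : a ∈ S <;> by_cases hb : b ∈ S
      · simp [ha, hb]
      · simp [ha, hb, hf0 a ha, hf1 b hb]
      · simp [ha, hb, hf0 b hb, hf1 a ha]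
      · simp only [ha, hb, hf1 a ha, hf1 b hb]
        split_ifs <;> first | omega | (exfalso; grind)

theorem stmt8 (G : SimpleGraph V) [Fintype V] [DecidableEq V] [DecidableRel G.Adj]
    (t : ℝ) (ht : 0 < t) (s : ℕ) (hst : (s : ℝ) = (Fintype.card V : ℝ) * t)
    (hm : G.edgeFinset.card ≤ s) (h2m : s ≤ 2 * G.edgeFinset.card) :
    Sdyn G t = Pbeta G (s - G.edgeFinset.card) := by
  unfold Sdyn Pbeta
  congr 1
  ext c
  simp only [Set.mem_setOf_eq, ← hst]
  constructor
  · rintro ⟨τ, D, hτ, hs, hD, hc⟩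
    refine ⟨D, hc, ?_⟩
    have h1 : s ≤ ∑ v, τ v := by exact_mod_cast hs
    have := dyn_to_cover_aux G τ D hτ hD
    omega
  · rintro ⟨S, hc, hS⟩
    obtain ⟨τ, hτ, hD, hsum⟩ := cover_to_dyn_aux G S
    refine ⟨τ, S, hτ, ?_, hD, hc⟩
    have h1 : s ≤ ∑ v, τ v := by omega
    exact_mod_cast h1
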